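/- Let f be the local rule of width 4 with code number 53184, and define g : ℤ^4 → ℤ by g(x_0,x_1,x_2,x_3) = x_1 − 1 + Θ(x_2 − x_1 − 1). Then for every strictly increasing s : ℤ → ℤ, the function t = g_{∞,1}(s) is strictly increasing and φ(t) = f_∞(φ(s)). -/

import Mathlib

/-- For a (strictly increasing) `s : ℤ → ℤ`, `phi s` is the occupancy bisequence:
`phi s i = 1` iff `i` lies in the range of `s`. -/
noncomputable def phi (s : ℤ → ℤ) (i : ℤ) : Fin 2 :=
  haveI := Classical.propDecidable (i ∈ Set.range s)
  if i ∈ Set.range s then 1 else 0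

/-- The local rule of width 4 with code number `C`: `f(x₁,x₂,x₃,x₄)` is the
binary digit of `C` at position `8x₁ + 4x₂ + 2x₃ + x₄`. -/
def ruleOfCode (C : ℕ) (x : Fin 4 → Fin 2) : Fin 2 :=
  if C.testBit (8 * (x 0 : ℕ) + 4 * (x 1 : ℕ) + 2 * (x 2 : ℕ) + (x 3 : ℕ)) then 1 else 0

/-- The step function: `Θ(m) = 1` if `m > 0` and `Θ(m) = 0` otherwise. -/
def theta (m : ℤ) : ℤ := if 0 < m then 1 else 0

/-- The delta function: `δ_{m,n} = 1` if `m = n` and `δ_{m,n} = 0` otherwise. -/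
def deltaZ (m k : ℤ) : ℤ := if m = k then 1 else 0

/-! A particle moves one cell to the left when the cell to its right is occupied, and stays put
otherwise. So a particle found in cell `i` after the step either came from `i + 1`, when `i + 1` and
`i + 2` were both occupied, or was already in `i`, when `i + 1` was empty. In other words, the new
content of `i` is the old content of `i + 2` if `i + 1` was occupied, and that of `i` if it was not.
Rule 53184 is exactly this multiplexer, its second input selecting between the first and third. -/

open Set

theorem add_one_mem_range_iff_of_strictMono {α β : Type*}
    [LinearOrder α] [Add α] [One α] [SuccAddOrder α]
    [PartialOrder β] [Add β] [One β] [SuccAddOrder β] [NoMaxOrder β]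
    {s : α → β} (hs : StrictMono s) (j : α) :
    s j + 1 ∈ range s ↔ s (j + 1) = s j + 1 := by
  refine ⟨?_, fun h => ⟨j + 1, h⟩⟩
  rintro ⟨k, hk⟩
  have hjk : j < k := hs.lt_iff_lt.1 (hk ▸ (Order.covBy_add_one (s j)).lt)
  apply le_antisymm
  · exact hk ▸ hs.monotone (Order.add_one_le_of_lt hjk)
  · exact Order.add_one_le_of_lt (hs ((Order.add_one_le_iff_of_not_isMax hjk.not_isMax).1 le_rfl))

theorem phi_eq_one_iff {s : ℤ → ℤ} {i : ℤ} : phi s i = 1 ↔ i ∈ range s := by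
  simp [phi]

theorem phi_eq_zero_iff {s : ℤ → ℤ} {i : ℤ} : phi s i = 0 ↔ i ∉ range s := by
  simp [phi]

theorem phi_eq_phi_iff {s t : ℤ → ℤ} {i j : ℤ} :
    phi s i = phi t j ↔ (i ∈ range s ↔ j ∈ range t) := by
  rw [← phi_eq_one_iff, ← phi_eq_one_iff]
  generalize phi s i = a, phi t j = b
  decide +revert

theorem ruleOfCode_53184_eq_ite (x : Fin 4 → Fin 2) :
    ruleOfCode 53184 x = if x 1 = 0 then x 0 else x 2 := by
  decide +revert

theorem theta_nonneg (m : ℤ) : 0 ≤ theta m := by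
  unfold theta
  split_ifs <;> decide

theorem theta_le_self {m : ℤ} (hm : 0 ≤ m) : theta m ≤ m := by
  unfold theta
  split_ifs <;> lia

/-- The bisequence `t = g_{∞,1}(s)` of particle positions after one time step, for
`g(x₀, x₁, x₂, x₃) = x₁ - 1 + Θ(x₂ - x₁ - 1)`. -/
def particleStep (s : ℤ → ℤ) (i : ℤ) : ℤ :=
  s i - 1 + theta (s (i + 1) - s i - 1)

section particleStep

variable {s : ℤ → ℤ}

theorem strictMono_particleStep (hs : StrictMono s) : StrictMono (particleStep s) := by
  refine strictMono_int_of_lt_succ fun j => ?_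
  have hgap : 0 ≤ s (j + 1) - s j - 1 := by
    have := hs (lt_add_one j)
    lia
  calc
    particleStep s j ≤ s j - 1 + (s (j + 1) - s j - 1) :=
      add_le_add_right (theta_le_self hgap) _
    _ < s (j + 1) - 1 := by linarith
    _ ≤ particleStep s (j + 1) := le_add_of_nonneg_right (theta_nonneg _)

theorem particleStep_eq_sub_one (hs : StrictMono s) {j : ℤ} (hj : s j + 1 ∈ range s) :
    particleStep s j = s j - 1 := by
  rw [add_one_mem_range_iff_of_strictMono hs] at hj
  simp [particleStep, theta, hj]

theorem particleStep_eq_self (hs : StrictMono s) {j : ℤ} (hj : s j + 1 ∉ range s) :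
    particleStep s j = s j := by
  rw [add_one_mem_range_iff_of_strictMono hs] at hj
  have hgap : 0 < s (j + 1) - s j - 1 := by
    have := hs (lt_add_one j)
    lia
  rw [particleStep, theta, if_pos hgap, sub_add_cancel]

theorem mem_range_particleStep_of_add_one_mem (hs : StrictMono s)
    {i : ℤ} (hi : i + 1 ∈ range s) :
    i ∈ range (particleStep s) ↔ i + 2 ∈ range s := by
  constructor
  · rintro ⟨j, rfl⟩
    by_cases hj : s j + 1 ∈ range s
    · rwa [particleStep_eq_sub_one hs hj, show s j - 1 + 2 = s j + 1 by ring]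
    · exact absurd (particleStep_eq_self hs hj ▸ hi) hj
  · obtain ⟨j, hj⟩ := hi
    intro hi₂
    have hright : s j + 1 ∈ range s := by rwa [hj, add_assoc]
    exact ⟨j, by rw [particleStep_eq_sub_one hs hright, hj, add_sub_cancel_right]⟩

theorem mem_range_particleStep_of_add_one_notMem (hs : StrictMono s)
    {i : ℤ} (hi : i + 1 ∉ range s) :
    i ∈ range (particleStep s) ↔ i ∈ range s := by
  constructor
  · rintro ⟨j, rfl⟩
    by_cases hj : s j + 1 ∈ range s
    · exact absurd ⟨j, by rw [particleStep_eq_sub_one hs hj, sub_add_cancel]⟩ hi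
    · exact ⟨j, (particleStep_eq_self hs hj).symm⟩
  · rintro ⟨j, rfl⟩
    exact ⟨j, particleStep_eq_self hs hi⟩

theorem phi_particleStep (hs : StrictMono s) (i : ℤ) :
    phi (particleStep s) i = if phi s (i + 1) = 0 then phi s i else phi s (i + 2) := by
  split_ifs with hi <;> rw [phi_eq_zero_iff] at hi
  · exact phi_eq_phi_iff.2 (mem_range_particleStep_of_add_one_notMem hs hi)
  · exact phi_eq_phi_iff.2 (mem_range_particleStep_of_add_one_mem hs (not_not.1 hi))

end particleStep

/-- For the conservative 4-input rule with code number 53184 and the particle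
mapping `g(x₀,x₁,x₂,x₃) = x₁ - 1 + Θ(x₂ - x₁ - 1)`: for every strictly increasing `s : ℤ → ℤ`,
the bisequence `t = g_{∞,1}(s)`, `t i = g (s (i-1)) (s i) (s (i+1)) (s (i+2))`,
is strictly increasing and `φ(t) = f_∞(φ(s))`. -/
theorem stmt_14 (s : ℤ → ℤ) (hs : StrictMono s) :
    StrictMono (fun i : ℤ => s i - 1 + theta (s (i + 1) - s i - 1)) ∧
    ∀ i : ℤ,
      phi (fun i : ℤ => s i - 1 + theta (s (i + 1) - s i - 1)) i =
        ruleOfCode 53184 (fun k : Fin 4 => phi s (i + (k : ℕ))) := by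
  refine ⟨strictMono_particleStep hs, fun i => ?_⟩
  rw [ruleOfCode_53184_eq_ite]
  simp only [Fin.val_zero, Fin.val_one, Fin.val_two, Nat.cast_zero, Nat.cast_one,
    Nat.cast_ofNat, add_zero]
  exact phi_particleStep hs i
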